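/- Let k be a field and A = k[x,y]. Let d_1 : A^3 → A^3 be the A-linear map with d_1(e_1) = (x, −x, 0), d_1(e_2) = (y, 0, −y), d_1(e_3) = (0, x^2, −x^2), and set M := A^3 / im(d_1). Then, as k-vector spaces, Tor_0^{A}(M, k) has dimension 3, Tor_1^{A}(M, k) has dimension 3, Tor_2^{A}(M, k) has dimension 1, and Tor_i^{A}(M, k) = 0 for all i ≥ 3, where k carries the A-module structure in which both variables act as zero. -/

import Mathlib

/-!
Since `Tor` is derived here in its second argument, it is the homology of `M ⊗ K`, where `K` is a
projective resolution of the residue field `k`. For `K` one takes the Koszul complex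
`0 → A → A² → A → 0` of the regular sequence `x, y` (`kosResolution`), so that `Tor(M, k)` is the
homology of `M → M² → M`, with maps `z ↦ (-y z, x z)` and `(a, b) ↦ x a + y b` (`torIso`). It
vanishes in degrees `≥ 3` because `K` does.

The module is decomposed by the change of basis `e₀, e₁ - e₀, e₂ - e₀` of `A³`, in which `im d₁`
becomes `0 ⊕ (x) ⊕ (x², y)`; hence `M ≅ A ⊕ A/(x) ⊕ A/(x², y)` (`toM_eq_zero_iff`). The three
summands contribute `1, 0, 0`, then `1, 1, 0` and `1, 2, 1` to the dimensions in degrees `0, 1, 2`.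
These contributions are realized by explicit `k`-linear families of cycles `rep0`, `rep1`, `rep2`,
which are shown to be bijective onto cycles modulo boundaries (`rep0_inj`, `rep0_surj` and so on).
The passage from such a family to the dimension of the abstract homology is
`finrank_of_representatives`.
-/

open CategoryTheory MvPolynomial

noncomputable section

/-- `A = k[x,y]`. -/
abbrev A2 (k : Type) [Field k] := MvPolynomial (Fin 2) k

/-- `k` as a module over `A = k[x,y]`, with both variables acting as zero. -/
def ResField (k : Type) [Field k] : Type := k

instance (k : Type) [Field k] : AddCommGroup (ResField k) :=
  inferInstanceAs (AddCommGroup k)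

instance (k : Type) [Field k] : Module (A2 k) (ResField k) :=
  Module.compHom k (constantCoeff : A2 k →+* k)

/-- The matrix of `d₁ : A³ → A³` with columns `(x,−x,0)`, `(y,0,−y)`, `(0,x²,−x²)`. -/
def d1Matrix (k : Type) [Field k] : Matrix (Fin 3) (Fin 3) (A2 k) :=
  Matrix.of
    ![![X 0, X 1, 0],
      ![-(X 0), 0, (X 0)^2],
      ![0, -(X 1), -((X 0)^2)]]

/-- `M = A³/im(d₁)`, the `H₀` persistence module of a bifiltration of the circle. -/
def Mcirc (k : Type) [Field k] : Type :=
  (Fin 3 → A2 k) ⧸ LinearMap.range (Matrix.toLin' (d1Matrix k))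

instance (k : Type) [Field k] : AddCommGroup (Mcirc k) :=
  inferInstanceAs (AddCommGroup ((Fin 3 → A2 k) ⧸ LinearMap.range (Matrix.toLin' (d1Matrix k))))

instance (k : Type) [Field k] : Module (A2 k) (Mcirc k) :=
  inferInstanceAs (Module (A2 k) ((Fin 3 → A2 k) ⧸ LinearMap.range (Matrix.toLin' (d1Matrix k))))

/-- `Tor_i^A(M, k)` for `M = A³/im(d₁)`. -/
def TorCirc (k : Type) [Field k] (i : ℕ) : ModuleCat (A2 k) :=
  ((Tor (ModuleCat (A2 k)) i).obj (ModuleCat.of (A2 k) (Mcirc k))).obj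
    (ModuleCat.of (A2 k) (ResField k))

/-! ### Polynomials in two variables -/

/-- The polynomials vanishing at the origin form the ideal `(x, y)`. -/
lemma exists_of_constantCoeff {k : Type} [Field k] {p : A2 k} (hp : constantCoeff p = 0) :
    ∃ a b : A2 k, p = X 0 * a + X 1 * b := by
  have h : p ∈ Ideal.span ((X : Fin 2 → A2 k) '' Set.univ) := by
    rw [mem_ideal_span_X_image]
    intro m hm
    by_contra! hc
    have : m = 0 := by ext i; exact hc i trivial
    subst this
    exact (mem_support_iff.1 hm) hp
  have hs : (X : Fin 2 → A2 k) '' Set.univ = {X 0, X 1} := by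
    ext q; simp [Fin.exists_fin_two, eq_comm]
  rw [hs, Ideal.mem_span_pair] at h
  obtain ⟨a, b, h⟩ := h
  exact ⟨a, b, by rw [← h]; ring⟩

/-- The coefficient of the monomial `x` (not a polynomial in `y`), as a `k`-linear functional. -/
def coeffX {k : Type} [Field k] : A2 k →ₗ[k] k := lcoeff k (Finsupp.single 0 1)

section coeffs
variable {k : Type} [Field k]

lemma coeffX_X0_mul (p : A2 k) : coeffX (X 0 * p) = constantCoeff p := by
  have := coeff_X_mul (0 : Fin 2 →₀ ℕ) (0 : Fin 2) p
  simpa [coeffX, constantCoeff_eq] using this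

lemma coeffX_X1_mul (p : A2 k) : coeffX (X 1 * p) = 0 := by
  simp [coeffX, coeff_X_mul']

lemma coeffX_C (c : k) : coeffX (C c : A2 k) = 0 := by
  simp only [coeffX, lcoeff_apply, coeff_C]
  rw [if_neg]
  intro h
  simpa using DFunLike.congr_fun h 0

/-- The ideal `(x², y)` consists of the polynomials whose coefficients at `1` and `x` vanish. -/
lemma exists_of_coeffs {p : A2 k} (h0 : constantCoeff p = 0) (h1 : coeffX p = 0) :
    ∃ a b : A2 k, p = X 0 ^ 2 * a + X 1 * b := by
  obtain ⟨a, b, rfl⟩ := exists_of_constantCoeff h0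
  rw [map_add, coeffX_X0_mul, coeffX_X1_mul, add_zero] at h1
  obtain ⟨c, d, rfl⟩ := exists_of_constantCoeff h1
  exact ⟨c, X 0 * d + b, by ring⟩

lemma X0_dvd_of_mul {b : A2 k} (h : (X 0 : A2 k) ∣ X 1 * b) : (X 0 : A2 k) ∣ b := by
  refine ((X_prime (R := k) (i := (0 : Fin 2))).dvd_or_dvd h).resolve_left ?_
  rw [X_dvd_X]
  decide

/-- `x, y` is a regular sequence: the syzygies of `(x, y)` are generated by `(-y, x)`. -/
lemma syzygy {a b : A2 k} (h : X 0 * a + X 1 * b = 0) :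
    ∃ t : A2 k, a = -(X 1 * t) ∧ b = X 0 * t := by
  have hd : (X 0 : A2 k) ∣ X 1 * b := ⟨-a, by linear_combination h⟩
  obtain ⟨t, rfl⟩ := X0_dvd_of_mul hd
  refine ⟨t, ?_, rfl⟩
  apply mul_left_cancel₀ (X_ne_zero (R := k) (0 : Fin 2))
  linear_combination h

end coeffs

/-! ### The module `M` and representing cycles for its Koszul homology -/

section module
variable {k : Type} [Field k]

/-- The quotient map `A³ → M`. -/
def toM : (Fin 3 → A2 k) →ₗ[A2 k] Mcirc k :=
  (LinearMap.range (Matrix.toLin' (d1Matrix k))).mkQ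

lemma toM_surjective : Function.Surjective (toM (k := k)) :=
  Submodule.mkQ_surjective _

/-- Membership in `im d₁`. In the basis `e₀, e₁ - e₀, e₂ - e₀` of `A³` the conditions say that the
first coordinate vanishes, the second lies in `(x)` and the third in `(x², y)`, so that
`M ≅ A ⊕ A/(x) ⊕ A/(x², y)`. -/
lemma toM_eq_zero_iff (m : Fin 3 → A2 k) : toM m = 0 ↔
    m 0 + m 1 + m 2 = 0 ∧ (X 0 : A2 k) ∣ m 1 ∧ constantCoeff (m 2) = 0 ∧ coeffX (m 2) = 0 := by
  have key : toM m = 0 ↔ m ∈ LinearMap.range (Matrix.toLin' (d1Matrix k)) :=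
    Submodule.Quotient.mk_eq_zero _
  rw [key]
  constructor
  · rintro ⟨v, rfl⟩
    have h2 : Matrix.toLin' (d1Matrix k) v 2 = X 0 * (-(X 0 * v 2)) + X 1 * (-v 1) := by
      simp [d1Matrix, Matrix.mulVec, dotProduct, Fin.sum_univ_three]; ring
    refine ⟨?_, ⟨-v 0 + X 0 * v 2, ?_⟩, ?_, ?_⟩
    · simp [d1Matrix, Matrix.mulVec, dotProduct, Fin.sum_univ_three]; ring
    · simp [d1Matrix, Matrix.mulVec, dotProduct, Fin.sum_univ_three]; ring
    · rw [h2]; simp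
    · rw [h2, map_add, coeffX_X0_mul, coeffX_X1_mul]; simp
  · rintro ⟨h, ⟨a, ha⟩, h0, h1⟩
    obtain ⟨b, c, hbc⟩ := exists_of_coeffs h0 h1
    -- solves `m 1 = -x v₀ + x² v₂` and `m 2 = -y v₁ - x² v₂` given `m 1 = x a`, `m 2 = x² b + y c`
    refine ⟨![-a - X 0 * b, -c, -b], ?_⟩
    ext1 i
    fin_cases i <;> simp [d1Matrix, Matrix.mulVec, dotProduct, Fin.sum_univ_three]
    · linear_combination -h + ha + hbc
    · linear_combination - ha
    · linear_combination - hbc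

/-- The second Koszul differential `N → N²`, `z ↦ (-y z, x z)`, of `(x, y)` on an `A`-module `N`. -/
def kos2 (N : Type) [AddCommGroup N] [Module (A2 k) N] : N →ₗ[A2 k] N × N :=
  LinearMap.prod (-((X 1 : A2 k) • LinearMap.id)) ((X 0 : A2 k) • LinearMap.id)

/-- The first Koszul differential `N² → N`, `(a, b) ↦ x a + y b`, of `(x, y)` on an `A`-module
`N`. -/
def kos1 (N : Type) [AddCommGroup N] [Module (A2 k) N] : N × N →ₗ[A2 k] N :=
  LinearMap.coprod ((X 0 : A2 k) • LinearMap.id) ((X 1 : A2 k) • LinearMap.id)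

lemma kos1_apply {N : Type} [AddCommGroup N] [Module (A2 k) N] (z : N × N) :
    kos1 (k := k) N z = (X 0 : A2 k) • z.1 + (X 1 : A2 k) • z.2 := rfl

lemma kos2_apply {N : Type} [AddCommGroup N] [Module (A2 k) N] (z : N) :
    kos2 (k := k) N z = (-((X 1 : A2 k) • z), (X 0 : A2 k) • z) := rfl

/-- Representatives for the zeroth Koszul homology `M / (x, y) M`: the vectors with constant
entries. -/
def rep0 : (Fin 3 → k) → Mcirc k := fun v => toM fun i => C (v i)

/-- Representatives for the first Koszul homology of `M`. Let `f₁`, `f₂` denote the classes of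
`e₁ - e₀` and `e₂ - e₀`, which generate the summands `A/(x)` and `A/(x², y)`. The vector `v` is sent
to `(v₀ f₁ + v₁ x f₂, v₂ f₂)`, a cycle because `x f₁ = x² f₂ = y f₂ = 0`. -/
def rep1 : (Fin 3 → k) → Mcirc k × Mcirc k := fun v =>
  (toM ![-C (v 0) - X 0 * C (v 1), C (v 0), X 0 * C (v 1)], toM ![-C (v 2), 0, C (v 2)])

/-- Representatives for the second Koszul homology of `M`, the submodule killed by `x` and `y`: the
multiples of the socle element `x f₂` of the summand `A/(x², y)`, where `f₂` is the class of
`e₂ - e₀`. -/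
def rep2 : (Fin 1 → k) → Mcirc k := fun v => toM ![-(X 0 * C (v 0)), 0, X 0 * C (v 0)]

lemma rep0_add (v w : Fin 3 → k) : rep0 (v + w) = rep0 v + rep0 w := by
  simp only [rep0, ← map_add]
  congr 1
  ext1 i
  simp

lemma rep0_smul (c : k) (v : Fin 3 → k) : rep0 (c • v) = (C c : A2 k) • rep0 v := by
  simp only [rep0, ← map_smul]
  congr 1
  ext1 i
  simp

lemma rep1_add (v w : Fin 3 → k) : rep1 (v + w) = rep1 v + rep1 w := by
  simp only [rep1, Prod.mk_add_mk, ← map_add toM]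
  congr 2 <;> ext1 i <;> fin_cases i <;> simp <;> ring

lemma rep1_smul (c : k) (v : Fin 3 → k) : rep1 (c • v) = (C c : A2 k) • rep1 v := by
  simp only [rep1, Prod.smul_mk, ← map_smul toM]
  congr 2 <;> ext1 i <;> fin_cases i <;> simp <;> ring

lemma rep2_add (v w : Fin 1 → k) : rep2 (v + w) = rep2 v + rep2 w := by
  simp only [rep2, ← map_add toM]
  congr 1; ext1 i; fin_cases i <;> simp <;> ring

lemma rep2_smul (c : k) (v : Fin 1 → k) : rep2 (c • v) = (C c : A2 k) • rep2 v := by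
  simp only [rep2, ← map_smul toM]
  congr 1; ext1 i; fin_cases i <;> simp <;> ring

lemma rep0_inj (v : Fin 3 → k) (z : Mcirc k × Mcirc k) (h : rep0 v = kos1 (k := k) _ z) :
    v = 0 := by
  obtain ⟨a, ha⟩ := toM_surjective z.1
  obtain ⟨b, hb⟩ := toM_surjective z.2
  rw [kos1_apply, ← ha, ← hb, rep0, ← map_smul, ← map_smul, ← map_add, ← sub_eq_zero,
    ← map_sub, toM_eq_zero_iff] at h
  obtain ⟨h, ⟨c, hc⟩, h2, -⟩ := h
  apply_fun constantCoeff at h hc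
  simp at h hc h2
  ext i
  fin_cases i
  · simpa [hc, h2] using h
  · exact hc
  · exact h2

lemma rep0_surj (z : Mcirc k) : ∃ (v : Fin 3 → k) (w : Mcirc k × Mcirc k),
    z = rep0 v + kos1 (k := k) _ w := by
  obtain ⟨m, rfl⟩ := toM_surjective z
  have h (i : Fin 3) : ∃ a b : A2 k, m i - C (constantCoeff (m i)) = X 0 * a + X 1 * b :=
    exists_of_constantCoeff (by simp)
  choose a b hab using h
  refine ⟨fun i => constantCoeff (m i), (toM a, toM b), ?_⟩
  rw [kos1_apply, rep0, ← map_smul, ← map_smul, ← map_add, ← map_add]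
  congr 1
  ext1 i
  simp only [Pi.add_apply, Pi.smul_apply, smul_eq_mul]
  rw [← hab]; ring

lemma rep1_cycle (v : Fin 3 → k) : kos1 (k := k) _ (rep1 v) = 0 := by
  rw [kos1_apply, rep1, ← map_smul, ← map_smul, ← map_add, toM_eq_zero_iff]
  refine ⟨?_, ⟨C (v 0), ?_⟩, ?_, ?_⟩
  · simp; ring
  · simp
  · simp
  · simp [coeffX_X0_mul, coeffX_X1_mul]

lemma rep1_inj (v : Fin 3 → k) (z : Mcirc k) (h : rep1 v = kos2 (k := k) _ z) : v = 0 := by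
  obtain ⟨a, rfl⟩ := toM_surjective z
  rw [kos2_apply, rep1, Prod.mk.injEq, ← map_smul, ← map_smul, ← map_neg toM] at h
  obtain ⟨h, h'⟩ := h
  rw [← sub_eq_zero, ← map_sub, toM_eq_zero_iff] at h h'
  obtain ⟨-, ⟨c, hc⟩, -, h1⟩ := h
  obtain ⟨-, -, h2, -⟩ := h'
  apply_fun constantCoeff at hc
  simp [coeffX_X0_mul, coeffX_X1_mul] at hc h1 h2
  ext i
  fin_cases i <;> assumption

/-- In the coordinates of `M ≅ A ⊕ A/(x) ⊕ A/(x², y)`, the first one is exact apart from degree `0`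
by `syzygy`, and in the other two every cycle is reduced by a boundary to the shape of `rep1`. -/
lemma rep1_surj (z : Mcirc k × Mcirc k) (hz : kos1 (k := k) _ z = 0) :
    ∃ (v : Fin 3 → k) (w : Mcirc k), z = rep1 v + kos2 (k := k) _ w := by
  obtain ⟨z, z'⟩ := z
  obtain ⟨a, rfl⟩ := toM_surjective z
  obtain ⟨b, rfl⟩ := toM_surjective z'
  rw [kos1_apply, ← map_smul, ← map_smul, ← map_add, toM_eq_zero_iff] at hz
  obtain ⟨hs, h1, -, h2⟩ := hz
  simp only [Pi.add_apply, Pi.smul_apply, smul_eq_mul] at hs h1 h2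
  rw [map_add, coeffX_X0_mul, coeffX_X1_mul, add_zero] at h2
  have hb1 : (X 0 : A2 k) ∣ b 1 :=
    X0_dvd_of_mul ((dvd_add_right (dvd_mul_right _ _)).1 h1)
  obtain ⟨t, ht, ht'⟩ := syzygy (a := a 0 + a 1 + a 2) (b := b 0 + b 1 + b 2)
    (by linear_combination hs)
  obtain ⟨r, s, hrs⟩ := exists_of_constantCoeff (p := a 1 - C (constantCoeff (a 1))) (by simp)
  -- The element bounding the difference has coordinates `(t, -s, coeffX (b 2))`: multiplying by
  -- `(-y, x)`, its first coordinate gives `(-y t, x t)`, the second gives `(y s, 0)` modulo `x`, and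
  -- the third supplies the term of degree one of `b 2`.
  refine ⟨![constantCoeff (a 1), coeffX (a 2), constantCoeff (b 2)],
    toM ![t + s - C (coeffX (b 2)), -s, C (coeffX (b 2))], ?_⟩
  rw [kos2_apply, rep1, Prod.mk_add_mk, Prod.mk.injEq, ← map_smul, ← map_smul, ← map_neg toM,
    ← map_add, ← map_add, ← sub_eq_zero, ← map_sub, ← sub_eq_zero (a := toM b), ← map_sub,
    toM_eq_zero_iff, toM_eq_zero_iff]
  refine ⟨⟨?_, ⟨r, ?_⟩, ?_, ?_⟩, ⟨?_, ?_, ?_, ?_⟩⟩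
  · simp; linear_combination ht
  · simp; linear_combination hrs
  · simp [h2]
  · simp [coeffX_X0_mul, coeffX_X1_mul]
  · simp; linear_combination ht'
  · simpa using dvd_add hb1 (dvd_mul_right _ s)
  · simp
  · simp [coeffX_X0_mul, coeffX_C]

lemma rep2_cycle (v : Fin 1 → k) : kos2 (k := k) _ (rep2 v) = 0 := by
  rw [kos2_apply, rep2, ← map_smul, ← map_smul, ← map_neg toM, Prod.mk_eq_zero, toM_eq_zero_iff,
    toM_eq_zero_iff]
  simp [coeffX_X0_mul, coeffX_X1_mul]

lemma rep2_inj (v : Fin 1 → k) (h : rep2 v = 0) : v = 0 := by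
  rw [rep2, toM_eq_zero_iff] at h
  obtain ⟨-, -, -, h⟩ := h
  simp [coeffX_X0_mul] at h
  ext i
  fin_cases i
  exact h

lemma rep2_surj (z : Mcirc k) (hz : kos2 (k := k) _ z = 0) : ∃ v : Fin 1 → k, z = rep2 v := by
  obtain ⟨m, rfl⟩ := toM_surjective z
  rw [kos2_apply, ← map_smul, ← map_smul, ← map_neg toM, Prod.mk_eq_zero, toM_eq_zero_iff,
    toM_eq_zero_iff] at hz
  obtain ⟨⟨-, h1, -, -⟩, hs, -, -, h2⟩ := hz
  simp [coeffX_X0_mul] at h1 hs h2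
  rw [← mul_add, ← mul_add] at hs
  have hs' := (mul_eq_zero.1 hs).resolve_left (X_ne_zero _)
  refine ⟨fun _ => coeffX (m 2), ?_⟩
  rw [rep2, ← sub_eq_zero, ← map_sub, toM_eq_zero_iff]
  refine ⟨?_, ?_, ?_, ?_⟩
  · simp; linear_combination hs'
  · simpa using X0_dvd_of_mul h1
  · simp [h2]
  · simp [coeffX_X0_mul]

end module

/-! ### Dimension of homology from representatives -/

section homology
variable {k : Type} [Field k]

/-- The dimension of the homology at `P₂` of a complex `P₁ → P₂ → P₃` of `A`-modules is read off
from a `k`-linear choice `φ` of representing cycles which is bijective modulo boundaries. The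
homology enters through any isomorphic module `T`, and the complex through an isomorphic short
complex `S` of `ModuleCat A`. -/
lemma finrank_of_representatives {S : ShortComplex (ModuleCat (A2 k))} {T : ModuleCat (A2 k)}
    (i : S.homology ≅ T)
    {P₁ P₂ P₃ : Type} [AddCommGroup P₁] [AddCommGroup P₂] [AddCommGroup P₃]
    [Module (A2 k) P₁] [Module (A2 k) P₂] [Module (A2 k) P₃]
    (f : P₁ →ₗ[A2 k] P₂) (g : P₂ →ₗ[A2 k] P₃)
    (e₁ : S.X₁ ≃ₗ[A2 k] P₁) (e₂ : S.X₂ ≃ₗ[A2 k] P₂) (e₃ : S.X₃ ≃ₗ[A2 k] P₃)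
    (hf : ∀ x, e₂ (S.f.hom x) = f (e₁ x)) (hg : ∀ x, e₃ (S.g.hom x) = g (e₂ x))
    {n : ℕ} (φ : (Fin n → k) → P₂) (hadd : ∀ v w, φ (v + w) = φ v + φ w)
    (hsmul : ∀ (c : k) v, φ (c • v) = (C c : A2 k) • φ v)
    (hcycle : ∀ v, g (φ v) = 0) (hinj : ∀ v x, φ v = f x → v = 0)
    (hsurj : ∀ z, g z = 0 → ∃ v x, z = φ v + f x) :
    letI : Module k T := Module.compHom _ (algebraMap k (A2 k))
    Module.finrank k T = n := by
  let : Module k T := Module.compHom _ (algebraMap k (A2 k))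
  have hcyc (v) : e₂.symm (φ v) ∈ LinearMap.ker S.g.hom := by
    rw [LinearMap.mem_ker, ← e₃.map_eq_zero_iff, hg, e₂.apply_symm_apply, hcycle]
  let j : (LinearMap.ker S.g.hom ⧸ LinearMap.range S.moduleCatToCycles) ≃ₗ[A2 k] T :=
    (S.moduleCatHomologyIso.symm ≪≫ i).toLinearEquiv
  let ψ : (Fin n → k) →ₗ[k] T :=
    { toFun v := j (Submodule.Quotient.mk ⟨e₂.symm (φ v), hcyc v⟩)
      map_add' v w := by
        rw [← map_add, ← Submodule.Quotient.mk_add]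
        congr 2
        ext
        simp [hadd]
      map_smul' c v := by
        change _ = (C c : A2 k) • j _
        rw [← map_smul, ← Submodule.Quotient.mk_smul]
        congr 2
        ext
        simp [hsmul] }
  have hψ : Function.Bijective ψ := by
    constructor
    · rw [injective_iff_map_eq_zero]
      intro v hv
      have hv' := (j.map_eq_zero_iff.1 hv)
      rw [Submodule.Quotient.mk_eq_zero] at hv'
      obtain ⟨x, hx⟩ := hv'
      have hx' : S.f.hom x = e₂.symm (φ v) := congrArg Subtype.val hx
      refine hinj v (e₁ x) ?_
      rw [← hf, hx', e₂.apply_symm_apply]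
    · intro t
      obtain ⟨q, rfl⟩ := j.surjective t
      obtain ⟨⟨z, hz⟩, rfl⟩ := Submodule.Quotient.mk_surjective _ q
      obtain ⟨v, x, hvx⟩ := hsurj (e₂ z) (by rw [← hg, LinearMap.mem_ker.1 hz, map_zero])
      refine ⟨v, congrArg j ?_⟩
      rw [eq_comm, Submodule.Quotient.eq]
      refine ⟨e₁.symm x, Subtype.ext ?_⟩
      change S.f.hom (e₁.symm x) = z - e₂.symm (φ v)
      apply e₂.injective
      rw [hf, map_sub, hvx]
      simp
  rw [← (LinearEquiv.ofBijective ψ hψ).finrank_eq, Module.finrank_fin_fun]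

end homology

/-! ### The Koszul resolution of the residue field -/

section koszul
variable (k : Type) [Field k]

/-- The terms `A, A², A, 0, 0, …` of the Koszul complex of `(x, y)`. -/
def kosX : ℕ → ModuleCat (A2 k)
  | 0 => ModuleCat.of _ (A2 k)
  | 1 => ModuleCat.of _ (A2 k × A2 k)
  | 2 => ModuleCat.of _ (A2 k)
  | _ + 3 => ModuleCat.of _ PUnit

/-- The differentials of the Koszul complex of `(x, y)`. -/
def kosD : ∀ n, kosX k (n + 1) ⟶ kosX k n
  | 0 => ModuleCat.ofHom (kos1 (A2 k))
  | 1 => ModuleCat.ofHom (kos2 (A2 k))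
  | _ + 2 => 0

lemma kosD_comp (n : ℕ) : kosD k (n + 1) ≫ kosD k n = 0 := by
  match n with
  | 0 =>
    apply ModuleCat.hom_ext
    ext
    change kos1 (A2 k) (kos2 (A2 k) 1) = 0
    rw [kos1_apply, kos2_apply]
    simp [mul_comm]
  | 1 => exact Limits.zero_comp
  | _ + 2 => exact Limits.zero_comp

/-- The Koszul complex of `(x, y)` over `A`. -/
def kosComplex : ChainComplex (ModuleCat (A2 k)) ℕ :=
  ChainComplex.of (kosX k) (kosD k) (kosD_comp k)

lemma kosComplex_d (n : ℕ) : (kosComplex k).d (n + 1) n = kosD k n :=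
  ChainComplex.of_d _ _ n

/-- Evaluation at the origin `A → k`. -/
def aug : A2 k →ₗ[A2 k] ResField k where
  toFun p := (constantCoeff p : k)
  map_add' p q := map_add constantCoeff p q
  map_smul' p q := map_mul constantCoeff p q

lemma kosD_aug : kosD k 0 ≫ ModuleCat.ofHom (aug k) = 0 := by
  apply ModuleCat.hom_ext
  refine LinearMap.ext fun (z : A2 k × A2 k) => ?_
  change constantCoeff (X 0 * z.1 + X 1 * z.2) = (0 : k)
  simp

lemma kosX_projective (n : ℕ) : Projective (kosX k n) := by
  match n with
  | 0 =>
    exact ModuleCat.projective_of_free (M := ModuleCat.of (A2 k) (A2 k))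
      (Module.Free.chooseBasis (A2 k) (A2 k))
  | 1 =>
    exact ModuleCat.projective_of_free (M := ModuleCat.of (A2 k) (A2 k × A2 k))
      (Module.Free.chooseBasis (A2 k) (A2 k × A2 k))
  | 2 =>
    exact ModuleCat.projective_of_free (M := ModuleCat.of (A2 k) (A2 k))
      (Module.Free.chooseBasis (A2 k) (A2 k))
  | _ + 3 => exact (ModuleCat.isZero_of_subsingleton (ModuleCat.of (A2 k) PUnit)).projective

lemma kosD_exact (n : ℕ) : (ShortComplex.mk _ _ (kosD_comp k n)).Exact := by
  rw [ShortComplex.moduleCat_exact_iff]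
  match n with
  | 0 =>
    intro z hz
    change kos1 (A2 k) z = 0 at hz
    obtain ⟨t, h1, h2⟩ := syzygy (a := z.1) (b := z.2) hz
    exact ⟨t, (Prod.ext h1 h2).symm⟩
  | 1 =>
    intro (z : A2 k) hz
    have hz' : X 0 * z = 0 := congrArg Prod.snd hz
    have : z = 0 := (mul_eq_zero.1 hz').resolve_left (X_ne_zero _)
    exact ⟨0, this.symm⟩
  | _ + 2 =>
    intro z hz
    exact ⟨0, rfl⟩

lemma kosD_aug_exact : (ShortComplex.mk _ _ (kosD_aug k)).Exact := by
  rw [ShortComplex.moduleCat_exact_iff]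
  intro z hz
  obtain ⟨a, b, h⟩ := exists_of_constantCoeff (p := z) hz
  exact ⟨(a, b), h.symm⟩

lemma aug_epi : Epi (ModuleCat.ofHom (aug k)) := by
  rw [ModuleCat.epi_iff_surjective]
  intro c
  exact ⟨(C (show k from c) : A2 k), constantCoeff_C (Fin 2) (show k from c)⟩

lemma kosComplex_exactAt (n : ℕ) : (kosComplex k).ExactAt (n + 1) := by
  rw [HomologicalComplex.exactAt_iff' _ (n + 1 + 1) (n + 1) n (by simp) (by simp)]
  refine (ShortComplex.exact_iff_of_iso ?_).1 (kosD_exact k n)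
  exact ShortComplex.isoMk (Iso.refl _) (Iso.refl _) (Iso.refl _)
    (by simpa using! kosComplex_d k (n+1)) (by simpa using! kosComplex_d k n)

/-- The Koszul complex as a projective resolution of the residue field. -/
def kosResolution : ProjectiveResolution (ModuleCat.of (A2 k) (ResField k)) where
  complex := kosComplex k
  projective := kosX_projective k
  π := (ChainComplex.toSingle₀Equiv _ _).symm ⟨ModuleCat.ofHom (aug k), by
    rw [kosComplex_d]; exact kosD_aug k⟩
  quasiIso := ⟨fun n => by
    cases n
    · rw [ChainComplex.quasiIsoAt₀_iff, ShortComplex.quasiIso_iff_of_zeros']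
      · have haug := ChainComplex.toSingle₀Equiv_symm_apply_f_zero (C := kosComplex k)
          (ModuleCat.ofHom (aug k)) (by rw [kosComplex_d]; exact kosD_aug k)
        refine (ShortComplex.exact_and_epi_g_iff_of_iso ?_).2 ⟨kosD_aug_exact k, aug_epi k⟩
        exact ShortComplex.isoMk (Iso.refl _) (Iso.refl _) (Iso.refl _)
          (by simpa using! (kosComplex_d k 0).symm)
            ((Category.id_comp _).trans (Eq.trans
              haug.symm
              (Category.comp_id _).symm))
      all_goals rfl
    · rw [quasiIsoAt_iff_exactAt']
      · apply kosComplex_exactAt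
      · apply ChainComplex.exactAt_succ_single_obj⟩

end koszul

/-! ### Tensoring the Koszul resolution with `M` -/

section tensor
variable (k : Type) [Field k] (N : Type) [AddCommGroup N] [Module (A2 k) N]
open scoped TensorProduct

/-- `N ⊗ A² ≃ N²`. -/
def tensorProdEquiv : N ⊗[A2 k] (A2 k × A2 k) ≃ₗ[A2 k] N × N :=
  TensorProduct.prodRight (A2 k) (A2 k) N (A2 k) (A2 k) ≪≫ₗ
    (TensorProduct.rid (A2 k) N).prodCongr (TensorProduct.rid (A2 k) N)

lemma rid_lTensor_kos1 (z : N ⊗[A2 k] (A2 k × A2 k)) :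
    TensorProduct.rid (A2 k) N ((kos1 (A2 k)).lTensor N z) =
      kos1 (k := k) N (tensorProdEquiv k N z) := by
  induction z with
  | zero => simp
  | add a b ha hb => simp only [map_add, ha, hb]
  | tmul n p =>
    simp [tensorProdEquiv, kos1_apply, add_smul, mul_smul]

lemma tensorProdEquiv_lTensor_kos2 (z : N ⊗[A2 k] A2 k) :
    tensorProdEquiv k N ((kos2 (A2 k)).lTensor N z) =
      kos2 (k := k) N (TensorProduct.rid (A2 k) N z) := by
  induction z with
  | zero => simp
  | add a b ha hb => simp only [map_add, ha, hb]
  | tmul n p =>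
    simp [tensorProdEquiv, kos2_apply, mul_smul, smul_comm p]

/-- The complex `M ⊗ K`, with `K` the Koszul resolution of `k`, whose homology is `Tor(M, k)`. -/
def torComplex : ChainComplex (ModuleCat (A2 k)) ℕ :=
  (((MonoidalCategory.tensoringLeft (ModuleCat (A2 k))).obj
    (ModuleCat.of (A2 k) (Mcirc k))).mapHomologicalComplex _).obj (kosComplex k)

lemma torComplex_d (n : ℕ) : ((torComplex k).d (n + 1) n).hom =
    (kosD k n).hom.lTensor (Mcirc k) :=
  congrArg (fun f => f.hom.lTensor (Mcirc k)) (kosComplex_d k n)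

/-- `Tor_j(M, k)` as the homology of the three-term piece of `M ⊗ K` in degrees `i, j, l`. At the end
`j = 0` of the complex the convention is `l = 0`, where the outgoing differential is zero. -/
def torIso (i j l : ℕ) (hi : (ComplexShape.down ℕ).prev j = i)
    (hl : (ComplexShape.down ℕ).next j = l) :
    ((torComplex k).sc' i j l).homology ≅ TorCirc k j :=
  ((torComplex k).homologyIsoSc' i j l hi hl).symm ≪≫
    ((kosResolution k).isoLeftDerivedObj _ j).symm

end tensor

/-- For `M = A³/im(d₁)` with `d₁` having columns `(x,−x,0)`, `(y,0,−y)`, `(0,x²,−x²)`: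
as `k`-vector spaces, `Tor₀(M,k)` has dimension `3`, `Tor₁(M,k)` has dimension `3`,
`Tor₂(M,k)` has dimension `1`, and `Tor_i(M,k) = 0` for `i ≥ 3`. -/
theorem tor_dims_circle (k : Type) [Field k] :
    (letI : Module k (TorCirc k 0) := Module.compHom _ (algebraMap k (A2 k));
      Module.finrank k (TorCirc k 0) = 3) ∧
    (letI : Module k (TorCirc k 1) := Module.compHom _ (algebraMap k (A2 k));
      Module.finrank k (TorCirc k 1) = 3) ∧
    (letI : Module k (TorCirc k 2) := Module.compHom _ (algebraMap k (A2 k));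
      Module.finrank k (TorCirc k 2) = 1) ∧
    (∀ i : ℕ, 3 ≤ i → Limits.IsZero (TorCirc k i)) := by
  refine ⟨?_, ?_, ?_, ?_⟩
  · refine finrank_of_representatives (torIso k 1 0 0 (by simp) (by simp))
      (kos1 (Mcirc k)) (0 : Mcirc k →ₗ[A2 k] Mcirc k) (tensorProdEquiv k (Mcirc k))
      (TensorProduct.rid (A2 k) (Mcirc k)) (TensorProduct.rid (A2 k) (Mcirc k))
      (fun x => ?_) (fun x => ?_) rep0 (fun v w => ?_) (fun c v => ?_)
      (fun v => rfl) rep0_inj (fun z _ => rep0_surj z)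
    · change TensorProduct.rid (A2 k) (Mcirc k) (((torComplex k).d 1 0).hom x) = _
      rw [torComplex_d]
      exact rid_lTensor_kos1 k _ x
    · change TensorProduct.rid (A2 k) (Mcirc k) (((torComplex k).d 0 0).hom x) = _
      rw [(torComplex k).shape 0 0 (by simp)]
      exact map_zero _
    · exact rep0_add v w
    · exact rep0_smul c v
  · refine finrank_of_representatives (torIso k 2 1 0 (by simp) (by simp))
      (kos2 (Mcirc k)) (kos1 (Mcirc k)) (TensorProduct.rid (A2 k) (Mcirc k))
      (tensorProdEquiv k (Mcirc k)) (TensorProduct.rid (A2 k) (Mcirc k))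
      (fun x => ?_) (fun x => ?_) rep1 rep1_add rep1_smul rep1_cycle rep1_inj rep1_surj
    · change tensorProdEquiv k (Mcirc k) (((torComplex k).d 2 1).hom x) = _
      rw [torComplex_d]
      exact tensorProdEquiv_lTensor_kos2 k _ x
    · change TensorProduct.rid (A2 k) (Mcirc k) (((torComplex k).d 1 0).hom x) = _
      rw [torComplex_d]
      exact rid_lTensor_kos1 k _ x
  · refine finrank_of_representatives (torIso k 3 2 1 (by simp) (by simp))
      (0 : TensorProduct (A2 k) (Mcirc k) PUnit.{1} →ₗ[A2 k] Mcirc k)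
      (kos2 (Mcirc k)) (LinearEquiv.refl _ _) (TensorProduct.rid (A2 k) (Mcirc k))
      (tensorProdEquiv k (Mcirc k))
      (fun x => ?_) (fun x => ?_) rep2 rep2_add rep2_smul rep2_cycle
      (fun v _ h => rep2_inj v h) (fun z hz => ?_)
    · change TensorProduct.rid (A2 k) (Mcirc k) (((torComplex k).d 3 2).hom x) = _
      rw [torComplex_d]
      change TensorProduct.rid (A2 k) (Mcirc k) (LinearMap.lTensor (Mcirc k) 0 x) = 0
      rw [LinearMap.lTensor_zero]
      exact map_zero _
    · change tensorProdEquiv k (Mcirc k) (((torComplex k).d 2 1).hom x) = _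
      rw [torComplex_d]
      exact tensorProdEquiv_lTensor_kos2 k _ x
    · obtain ⟨v, hv⟩ := rep2_surj z hz
      exact ⟨v, 0, by rw [hv, map_zero, add_zero]⟩
  · intro i hi
    obtain ⟨n, rfl⟩ := Nat.exists_eq_add_of_le' hi
    refine Limits.IsZero.of_iso ?_ ((kosResolution k).isoLeftDerivedObj _ (n + 3))
    refine ShortComplex.isZero_homology_of_isZero_X₂ _ ?_
    exact ((MonoidalCategory.tensoringLeft (ModuleCat (A2 k))).obj
      (ModuleCat.of (A2 k) (Mcirc k))).map_isZero
        (ModuleCat.isZero_of_subsingleton (ModuleCat.of (A2 k) PUnit.{1}))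

end
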